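/- Let H be a subgroup of G that is not normal in G, with |H| > 2. Then the set of numbers of common neighbours over all pairs of distinct non-adjacent vertices of Γ_H(G) equals {0, 2, 4, 6, |G| - |H|}. -/

import Mathlib

/-!
The substitution `t = v w⁻¹` turns the common neighbours `w` of `u` and `v` into the elements
`t ∈ S` with `d t ∈ S`, where `d = u v⁻¹` (`ncard_commonNbrs`), so only `d = (a, b)` matters.

* If `d ∉ S` is a nontrivial element of one of the three "lines" `(a, 1)`, `(1, a)`, `(a, a)`,
  then `a ∈ H`, and the solutions `t` are exactly the elements of `S` on the same line: there are
  `|G| - |H|` of them.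
* Otherwise `a ≠ 1`, `b ≠ 1`, `a ≠ b`, hence `t` and `d t` lie on different lines, and each of the
  six ordered pairs of different lines gives one candidate for `t` (`mem_sols_iff`). Whether a
  candidate is a solution is decided by whether `a`, `b`, `a⁻¹ b`, `a b⁻¹` lie in `H`. There are no
  solutions if `a, b ∈ H`, two if exactly one of `a, b` is in `H`, and otherwise
  `2 + 2 ([a⁻¹ b ∉ H] + [a b⁻¹ ∉ H])`.

All values occur. For `0` take distinct nontrivial `a, b ∈ H`, which exist as `|H| > 2`; for `2`
take `1 ≠ a ∈ H` and `b ∉ H`; for `4` take `a` and `b = h a` with `h ∈ H`, `a⁻¹ h a ∉ H`, which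
exist as `H` is not normal. For `6` one needs `a ∉ H` and `b ∉ H ∪ aH ∪ Ha`: the index of `H` is
at least `3` by non-normality, whereas the union has at most `3|H| - 1` elements because `a` is in
both `aH` and `Ha` (`exists_generic`).
-/

open Pointwise

variable {G : Type*}

/-- The connection set `S = {(g,e),(e,g),(g,g) : g ∈ G \ H}` (as a predicate). -/
def inS [Group G] (H : Subgroup G) (p : G × G) : Prop :=
  (p.1 ∉ H ∧ p.2 = 1) ∨ (p.1 = 1 ∧ p.2 ∉ H) ∨ (p.1 = p.2 ∧ p.1 ∉ H)

/-- Adjacency in the Cayley graph `Γ_H(G)` on `G × G`: distinct vertices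
`(g₁,g₂)`, `(g₃,g₄)` are adjacent iff `(g₁g₃⁻¹, g₂g₄⁻¹) ∈ S`. -/
def gAdj [Group G] (H : Subgroup G) (u v : G × G) : Prop :=
  u ≠ v ∧ inS H (u.1 * v.1⁻¹, u.2 * v.2⁻¹)

/-- The set of common neighbours of `u` and `v` in `Γ_H(G)`. -/
def commonNbrs [Group G] (H : Subgroup G) (u v : G × G) : Set (G × G) :=
  {w | gAdj H u w ∧ gAdj H v w}

/-- The `c`-set of `Γ_H(G)`: the set of all numbers of common neighbours of
pairs of distinct non-adjacent vertices. -/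
def cSet [Group G] (H : Subgroup G) : Set ℕ :=
  {n | ∃ u v : G × G, u ≠ v ∧ ¬ gAdj H u v ∧ n = (commonNbrs H u v).ncard}

/-- The elements `t` of the connection set `S` such that `d * t` is again in `S`. -/
def sols [Group G] (H : Subgroup G) (d : G × G) : Set (G × G) :=
  {t | inS H t ∧ inS H (d * t)}

lemma not_inS_one [Group G] (H : Subgroup G) : ¬ inS H (1 : G × G) := by
  simp [inS]

lemma gAdj_iff [Group G] (H : Subgroup G) (u v : G × G) : gAdj H u v ↔ inS H (u * v⁻¹) := by
  constructor
  · exact fun h => h.2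
  · refine fun h => ⟨?_, h⟩
    rintro rfl
    exact not_inS_one H (by simpa using h)

lemma ncard_commonNbrs [Group G] (H : Subgroup G) (u v : G × G) :
    (commonNbrs H u v).ncard = (sols H (u * v⁻¹)).ncard := by
  refine Set.ncard_congr (fun w _ => v * w⁻¹) ?_ ?_ ?_
  · rintro w ⟨h1, h2⟩
    rw [gAdj_iff] at h1 h2
    exact ⟨h2, by simpa [mul_assoc] using h1⟩
  · intro w w' _ _ h
    simpa using h
  · rintro t ⟨h1, h2⟩
    refine ⟨t⁻¹ * v, ⟨?_, ?_⟩, ?_⟩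
    · rw [gAdj_iff]; simpa [mul_assoc] using h2
    · rw [gAdj_iff]; simpa [mul_assoc] using h1
    · simp

lemma cSet_eq [Group G] (H : Subgroup G) :
    cSet H = {n | ∃ d : G × G, d ≠ 1 ∧ ¬ inS H d ∧ n = (sols H d).ncard} := by
  ext n
  constructor
  · rintro ⟨u, v, h1, h2, h3⟩
    refine ⟨u * v⁻¹, by rwa [Ne, mul_inv_eq_one], by rwa [gAdj_iff] at h2, ?_⟩
    rw [h3, ncard_commonNbrs]
  · rintro ⟨d, h1, h2, h3⟩
    refine ⟨d, 1, h1, by rw [gAdj_iff]; simpa using h2, ?_⟩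
    rw [h3, ncard_commonNbrs]; simp

/-- For `d` off the three lines, the six candidates for `t`, with the conditions under which
each of them is a solution. -/
lemma mem_sols_iff [Group G] (H : Subgroup G) {a b : G} (ha : a ≠ 1) (hb : b ≠ 1) (hab : a ≠ b)
    (t : G × G) : t ∈ sols H (a, b) ↔
      ((a ∉ H ∧ b ∉ H) ∧ (t = (a⁻¹, 1) ∨ t = (1, b⁻¹))) ∨
      (a⁻¹ * b ∉ H ∧ ((b ∉ H ∧ t = (a⁻¹ * b, 1)) ∨ (a ∉ H ∧ t = (1, b⁻¹ * a)))) ∨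
      (a * b⁻¹ ∉ H ∧ ((a ∉ H ∧ t = (a⁻¹, a⁻¹)) ∨ (b ∉ H ∧ t = (b⁻¹, b⁻¹)))) := by
  have e1 : b⁻¹ * a ∈ H ↔ a⁻¹ * b ∈ H := by rw [← H.inv_mem_iff]; simp
  have e2 : b * a⁻¹ ∈ H ↔ a * b⁻¹ ∈ H := by rw [← H.inv_mem_iff]; simp
  obtain ⟨x, y⟩ := t
  simp only [sols, Set.mem_ofPred_eq, inS, Prod.mk_mul_mk, Prod.mk.injEq]
  constructor
  · rintro ⟨⟨hx, rfl⟩ | ⟨rfl, hy⟩ | ⟨rfl, hx⟩, h⟩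
    · rcases h with ⟨-, h⟩ | ⟨h, h'⟩ | ⟨h, h'⟩
      · simp [hb] at h
      · obtain rfl := eq_inv_of_mul_eq_one_right h
        simp_all
      · obtain rfl : x = a⁻¹ * b := by rw [eq_inv_mul_iff_mul_eq, h, mul_one]
        simp_all
    · rcases h with ⟨h, h'⟩ | ⟨h, -⟩ | ⟨h, h'⟩
      · obtain rfl := eq_inv_of_mul_eq_one_right h'
        simp_all
      · simp [ha] at h
      · obtain rfl : y = b⁻¹ * a := by rw [eq_inv_mul_iff_mul_eq, ← h, mul_one]
        simp_all
    · rcases h with ⟨h, h'⟩ | ⟨h, h'⟩ | ⟨h, h'⟩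
      · obtain rfl := eq_inv_of_mul_eq_one_right h'
        simp_all
      · obtain rfl := eq_inv_of_mul_eq_one_right h
        simp_all
      · exact absurd (mul_right_cancel h) hab
  · rintro (⟨⟨h1, h2⟩, ⟨rfl, rfl⟩ | ⟨rfl, rfl⟩⟩ | ⟨h1, ⟨h2, rfl, rfl⟩ | ⟨h2, rfl, rfl⟩⟩ |
      ⟨h1, ⟨h2, rfl, rfl⟩ | ⟨h2, rfl, rfl⟩⟩) <;> simp_all

section Count

variable [Group G] (H : Subgroup G) {a b : G}

lemma ncard_sols_mem_mem (ha : a ≠ 1) (hb : b ≠ 1) (hab : a ≠ b) (hA : a ∈ H) (hB : b ∈ H) :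
    (sols H (a, b)).ncard = 0 := by
  have : sols H (a, b) = ∅ := by
    ext t
    rw [mem_sols_iff H ha hb hab]
    simp [hA, hB]
  simp [this]

lemma ncard_sols_mem_notMem (ha : a ≠ 1) (hb : b ≠ 1) (hab : a ≠ b) (hA : a ∈ H) (hB : b ∉ H) :
    (sols H (a, b)).ncard = 2 := by
  have : sols H (a, b) = {(a⁻¹ * b, 1), (b⁻¹, b⁻¹)} := by
    ext t
    rw [mem_sols_iff H ha hb hab]
    simp [hA, hB, H.mul_mem_cancel_left (H.inv_mem hA), H.mul_mem_cancel_left hA]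
  rw [this, Set.ncard_pair]
  simp [hb]

lemma ncard_sols_notMem_mem (ha : a ≠ 1) (hb : b ≠ 1) (hab : a ≠ b) (hA : a ∉ H) (hB : b ∈ H) :
    (sols H (a, b)).ncard = 2 := by
  have : sols H (a, b) = {(1, b⁻¹ * a), (a⁻¹, a⁻¹)} := by
    ext t
    rw [mem_sols_iff H ha hb hab]
    simp [hA, hB, H.mul_mem_cancel_right hB, H.mul_mem_cancel_right (H.inv_mem hB)]
  rw [this, Set.ncard_pair]
  simp [ha]

open Classical in
lemma ncard_sols_notMem_notMem (ha : a ≠ 1) (hb : b ≠ 1) (hab : a ≠ b) (hA : a ∉ H) (hB : b ∉ H) :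
    (sols H (a, b)).ncard =
      2 + (if a⁻¹ * b ∈ H then 0 else 2) + (if a * b⁻¹ ∈ H then 0 else 2) := by
  have h1 : a⁻¹ * b ≠ 1 := by rwa [Ne, inv_mul_eq_one]
  have h2 : b⁻¹ * a ≠ 1 := by rw [Ne, inv_mul_eq_one]; exact hab.symm
  have key : sols H (a, b) = (↑(({(a⁻¹, 1), (1, b⁻¹)} : Finset (G × G)) ∪
      (if a⁻¹ * b ∈ H then ∅ else {(a⁻¹ * b, 1), (1, b⁻¹ * a)}) ∪
      (if a * b⁻¹ ∈ H then ∅ else {(a⁻¹, a⁻¹), (b⁻¹, b⁻¹)})) : Set (G × G)) := by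
    ext t
    rw [mem_sols_iff H ha hb hab]
    split_ifs <;> simp_all <;> tauto
  rw [key, Set.ncard_coe_finset, Finset.card_union_of_disjoint, Finset.card_union_of_disjoint,
    Finset.card_pair]
  · congr 1
    · congr 1
      split_ifs
      · rfl
      · rw [Finset.card_pair]; simp [h1]
    · split_ifs
      · rfl
      · rw [Finset.card_pair]; simp [hab]
  · simp [ha]
  · split_ifs <;> simp [ha, hb]
  · split_ifs <;> simp [ha, hb]

lemma ncard_compl [Finite G] : {g : G | g ∉ H}.ncard = Nat.card G - Nat.card H := by
  have := Set.ncard_compl (H : Set G)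
  rw [Set.compl_def] at this
  simpa [← Nat.card_coe_set_eq] using this

lemma ncard_sols_fst [Finite G] (ha : a ≠ 1) (hA : a ∈ H) :
    (sols H (a, 1)).ncard = Nat.card G - Nat.card H := by
  rw [← ncard_compl, ← Set.ncard_image_of_injective {g : G | g ∉ H} (Prod.mk_left_injective (1 : G))]
  refine congrArg Set.ncard ?_
  ext ⟨x, y⟩
  simp only [sols, inS, Set.mem_ofPred_eq, Set.mem_image, Prod.mk_mul_mk, Prod.mk.injEq]
  constructor
  · rintro ⟨⟨hx, rfl⟩ | ⟨rfl, hy⟩ | ⟨rfl, hx⟩, h⟩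
    · exact ⟨x, hx, rfl, rfl⟩
    · exfalso
      rcases h with ⟨h, h'⟩ | ⟨h, h'⟩ | ⟨h, h'⟩ <;> simp_all
    · exfalso
      rcases h with ⟨h, h'⟩ | ⟨h, h'⟩ | ⟨h, h'⟩
      · simp_all
      · exact hx ((H.mul_mem_cancel_left hA).1 (h ▸ H.one_mem))
      · simp_all
  · rintro ⟨g, hg, rfl, rfl⟩
    simp [hg, H.mul_mem_cancel_left hA]

lemma ncard_sols_snd [Finite G] (ha : a ≠ 1) (hA : a ∈ H) :
    (sols H (1, a)).ncard = Nat.card G - Nat.card H := by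
  have hswap : ∀ p : G × G, inS H p.swap ↔ inS H p := by
    rintro ⟨x, y⟩
    simp only [inS, Prod.swap_prod_mk]
    constructor
    · rintro (h | h | ⟨rfl, h⟩)
      · exact .inr (.inl h.symm)
      · exact .inl h.symm
      · exact .inr (.inr ⟨rfl, h⟩)
    · rintro (h | h | ⟨rfl, h⟩)
      · exact .inr (.inl h.symm)
      · exact .inl h.symm
      · exact .inr (.inr ⟨rfl, h⟩)
  rw [← ncard_sols_fst H ha hA, ← Set.ncard_image_of_injective _ Prod.swap_injective]
  refine congrArg Set.ncard ?_
  rw [Set.image_swap_eq_preimage_swap]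
  ext t
  simp only [sols, Set.mem_preimage, Set.mem_ofPred_eq, hswap]
  rw [← hswap ((1, a) * t.swap)]
  rfl

lemma ncard_sols_diag [Finite G] (ha : a ≠ 1) (hA : a ∈ H) :
    (sols H (a, a)).ncard = Nat.card G - Nat.card H := by
  have hinj : Function.Injective (fun g : G => (g, g)) := fun x y h => (Prod.mk.inj h).1
  rw [← ncard_compl, ← Set.ncard_image_of_injective {g : G | g ∉ H} hinj]
  refine congrArg Set.ncard ?_
  ext ⟨x, y⟩
  simp only [sols, inS, Set.mem_ofPred_eq, Set.mem_image, Prod.mk_mul_mk, Prod.mk.injEq]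
  constructor
  · rintro ⟨⟨hx, rfl⟩ | ⟨rfl, hy⟩ | ⟨rfl, hx⟩, h⟩
    · exfalso
      rcases h with ⟨h, h'⟩ | ⟨h, h'⟩ | ⟨h, h'⟩ <;> simp_all
    · exfalso
      rcases h with ⟨h, h'⟩ | ⟨h, h'⟩ | ⟨h, h'⟩ <;> simp_all
    · exact ⟨x, hx, rfl, rfl⟩
  · rintro ⟨g, hg, rfl, rfl⟩
    simp [hg, H.mul_mem_cancel_left hA]

/-- A non-normal subgroup has index at least `3`, so the three cosets `H`, `aH`, `Ha`, the last two
of which share `a`, do not cover the group. -/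
lemma exists_generic [Finite G] (hnorm : ¬ H.Normal) (a : G) :
    ∃ b, b ∉ H ∧ a⁻¹ * b ∉ H ∧ a * b⁻¹ ∉ H := by
  have hi : 3 ≤ H.index := by
    have h0 : H.index ≠ 0 := H.index_ne_zero_of_finite
    have h1 : H.index ≠ 1 := fun h => hnorm (by
      rw [Subgroup.index_eq_one] at h; subst h; infer_instance)
    have h2 : H.index ≠ 2 := fun h => hnorm (Subgroup.normal_of_index_eq_two h)
    omega
  have hc : 3 * Nat.card H ≤ Nat.card G := by
    rw [← H.card_mul_index, mul_comm]
    exact Nat.mul_le_mul_left _ hi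
  by_contra! hcon
  set L : Set G := (fun h => a * h) '' (H : Set G)
  set R : Set G := (fun h => h * a) '' (H : Set G)
  have hcov : (Set.univ : Set G) ⊆ (H : Set G) ∪ (L ∪ R) := by
    intro b _
    by_cases hb : b ∈ H
    · exact .inl hb
    by_cases hl : a⁻¹ * b ∈ H
    · exact .inr (.inl ⟨_, hl, by simp⟩)
    · exact .inr (.inr ⟨_, H.inv_mem (hcon b hb hl), by simp⟩)
  have hH : (H : Set G).ncard = Nat.card H := by simp [← Nat.card_coe_set_eq]
  have hL : L.ncard = Nat.card H := by
    rw [← hH]; exact Set.ncard_image_of_injective _ (mul_right_injective a)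
  have hR : R.ncard = Nat.card H := by
    rw [← hH]; exact Set.ncard_image_of_injective _ (mul_left_injective a)
  have hLR : 0 < (L ∩ R).ncard := by
    rw [Set.ncard_pos]
    exact ⟨a, ⟨1, H.one_mem, by simp⟩, ⟨1, H.one_mem, by simp⟩⟩
  have h1 := Set.ncard_le_ncard hcov
  rw [Set.ncard_univ] at h1
  have h2 := Set.ncard_union_le (H : Set G) (L ∪ R)
  have h3 := Set.ncard_union_add_ncard_inter L R
  omega

end Count

/-- If `H` is a non-normal subgroup of `G` with `|H| > 2`, then the `c`-set of
`Γ_H(G)` equals `{0, 2, 4, 6, |G| - |H|}`. -/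
theorem stmt_10 [Group G] [Fintype G] (hG : 5 ≤ Nat.card G) (H : Subgroup G)
    (hnorm : ¬ H.Normal) (hcard : 2 < Nat.card H) :
    cSet H = {0, 2, 4, 6, Nat.card G - Nat.card H} := by
  have hline : ∀ {a b : G}, a ≠ 1 → b ≠ 1 → a ≠ b → ((a, b) : G × G) ≠ 1 ∧ ¬ inS H (a, b) := by
    intro a b ha hb hab
    simp [inS, ha, hb, hab]
  have hne : ∀ {a : G}, a ∉ H → a ≠ 1 := fun h h' => h (h' ▸ H.one_mem)
  obtain ⟨h₁, h₂, hh₁, hh₂, hh⟩ : ∃ x y : G, (x ∈ H ∧ x ≠ 1) ∧ (y ∈ H ∧ y ≠ 1) ∧ x ≠ y := by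
    have h3 : 2 < (H : Set G).ncard := by simpa [← Nat.card_coe_set_eq] using hcard
    have h4 := Set.ncard_sdiff_singleton_add_one H.one_mem (Set.toFinite (H : Set G))
    obtain ⟨x, hx, y, hy, hxy⟩ := (Set.one_lt_ncard (s := (H : Set G) \ {1})).1 (by omega)
    exact ⟨x, y, by simpa using hx, by simpa using hy, hxy⟩
  obtain ⟨h, c, hhH, hc⟩ : ∃ h c : G, h ∈ H ∧ c⁻¹ * h * c ∉ H := by
    by_contra! hcon
    exact hnorm ⟨fun n hn g => by simpa using hcon n g⁻¹ hn⟩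
  have hcH : c ∉ H := fun hc' => hc (H.mul_mem (H.mul_mem (H.inv_mem hc') hhH) hc')
  rw [cSet_eq]
  ext n
  simp only [Set.mem_ofPred_eq, Set.mem_insert_iff, Set.mem_singleton_iff]
  constructor
  · rintro ⟨⟨a, b⟩, hd, hS, rfl⟩
    by_cases hb : b = 1
    · subst hb
      have ha : a ≠ 1 := by rintro rfl; exact hd rfl
      have hA : a ∈ H := by by_contra hA; exact hS (.inl ⟨hA, rfl⟩)
      simp [ncard_sols_fst H ha hA]
    by_cases ha : a = 1
    · subst ha
      have hB : b ∈ H := by by_contra hB; exact hS (.inr (.inl ⟨rfl, hB⟩))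
      simp [ncard_sols_snd H hb hB]
    by_cases hab : a = b
    · subst hab
      have hA : a ∈ H := by by_contra hA; exact hS (.inr (.inr ⟨rfl, hA⟩))
      simp [ncard_sols_diag H ha hA]
    by_cases hA : a ∈ H <;> by_cases hB : b ∈ H
    · simp [ncard_sols_mem_mem H ha hb hab hA hB]
    · simp [ncard_sols_mem_notMem H ha hb hab hA hB]
    · simp [ncard_sols_notMem_mem H ha hb hab hA hB]
    · rw [ncard_sols_notMem_notMem H ha hb hab hA hB]
      split_ifs <;> simp
  · rintro (rfl | rfl | rfl | rfl | rfl)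
    · obtain ⟨hd, hS⟩ := hline hh₁.2 hh₂.2 hh
      exact ⟨_, hd, hS, (ncard_sols_mem_mem H hh₁.2 hh₂.2 hh hh₁.1 hh₂.1).symm⟩
    · have hab : h₁ ≠ c := fun h' => hcH (h' ▸ hh₁.1)
      obtain ⟨hd, hS⟩ := hline hh₁.2 (hne hcH) hab
      exact ⟨_, hd, hS, (ncard_sols_mem_notMem H hh₁.2 (hne hcH) hab hh₁.1 hcH).symm⟩
    · have hB : h * c ∉ H := by rwa [H.mul_mem_cancel_left hhH]
      have hL : c⁻¹ * (h * c) ∉ H := by rwa [← mul_assoc]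
      have hR : c * (h * c)⁻¹ ∈ H := by simpa using hhH
      have hab : c ≠ h * c := by
        intro h'
        rw [← h'] at hL
        exact hL (by simp)
      obtain ⟨hd, hS⟩ := hline (hne hcH) (hne hB) hab
      refine ⟨_, hd, hS, ?_⟩
      rw [ncard_sols_notMem_notMem H (hne hcH) (hne hB) hab hcH hB, if_neg hL, if_pos hR]
    · obtain ⟨b, hB, hL, hR⟩ := exists_generic H hnorm c
      have hab : c ≠ b := by
        rintro rfl
        exact hL (by simp)
      obtain ⟨hd, hS⟩ := hline (hne hcH) (hne hB) hab
      refine ⟨_, hd, hS, ?_⟩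
      rw [ncard_sols_notMem_notMem H (hne hcH) (hne hB) hab hcH hB, if_neg hL, if_neg hR]
    · refine ⟨(h₁, 1), ?_, ?_, (ncard_sols_fst H hh₁.2 hh₁.1).symm⟩
      · simp [hh₁.2]
      · simp [inS, hh₁.1, hh₁.2]
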